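/- arXiv:1807.11375 — 2 statements merged into one kernel-verified Lean document; each statement's English description precedes it below -/
import Mathlib

section
/- Let P ⊆ ℝ^d be a closed spanning pointed convex cone, A ≠ ℝ^d a P-module with A ∩ (−Ω) = ∅, where Ω is the interior of P. For the shift isometric representation {S^A_x}_{x∈P} on L²(A) given by (S^A_x f)(y) = f(y−x) if y−x ∈ A and 0 otherwise, one has: for every φ ∈ C_c(Int(A)) and every a ∈ Ω, (S^A_{ta})* φ = 0 for all sufficiently large t > 0. Consequently the representation is pure: ⋂_{t≥0} S^A_{ta}(L²(A)) = {0} for every a ∈ Ω. -/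
open MeasureTheory ContinuousLinearMap

/-!
If `a` lies in the interior of the cone `P`, then `a - u` lies in it for all `u` in some
neighbourhood of `0`, and rescaling by `t` shows that `t • a - y` lies in `interior P` for all
large `t`, uniformly for `y` in a bounded set. As `A` misses `-interior P`, shifting `A` by `t • a`
eventually carries it off every bounded set, and functions in the range of `S (t • a)` vanish off
the shifted `A`. Hence a function supported in a bounded set is eventually orthogonal to that range,
and a function lying in all the ranges vanishes almost everywhere.
-/

section Cone

open Filter Bornology
open scoped Pointwise Topology

variable {E : Type*} [AddCommGroup E] [Module ℝ E] [TopologicalSpace E]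
  [ContinuousConstSMul ℝ E]

theorem smul_mem_interior_of_forall_smul_mem {P : Set E}
    (hcone : ∀ c : ℝ, 0 < c → ∀ x ∈ P, c • x ∈ P) {t : ℝ} (ht : 0 < t) {a : E}
    (ha : a ∈ interior P) : t • a ∈ interior P := by
  have hsub : t • P ⊆ P := Set.smul_set_subset_iff.2 fun x hx => hcone t ht x hx
  have hmem : t • a ∈ interior (t • P) := by
    rw [interior_smul₀ ht.ne']
    exact Set.smul_mem_smul_set ha
  exact interior_mono hsub hmem

variable [IsTopologicalAddGroup E]

theorem eventually_forall_smul_sub_mem_interior {P : Set E}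
    (hcone : ∀ c : ℝ, 0 < c → ∀ x ∈ P, c • x ∈ P) {a : E} (ha : a ∈ interior P)
    {K : Set E} (hK : IsVonNBounded ℝ K) :
    ∀ᶠ t : ℝ in atTop, ∀ y ∈ K, t • a - y ∈ interior P := by
  have hnhds : {u | a - u ∈ interior P} ∈ 𝓝 (0 : E) :=
    (isOpen_interior.preimage (continuous_sub_left a)).mem_nhds (by simpa using ha)
  filter_upwards [IsOrderBornology.atTop_le_cobounded (hK hnhds), eventually_gt_atTop 0]
    with t hKt ht y hy
  obtain ⟨u, hu, rfl⟩ := hKt hy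
  rw [← smul_sub]
  exact smul_mem_interior_of_forall_smul_mem hcone ht hu

theorem eventually_forall_sub_smul_notMem {P A : Set E}
    (hcone : ∀ c : ℝ, 0 < c → ∀ x ∈ P, c • x ∈ P) (hdisj : Disjoint A (-interior P))
    {a : E} (ha : a ∈ interior P) {K : Set E} (hK : IsVonNBounded ℝ K) :
    ∀ᶠ t : ℝ in atTop, ∀ y ∈ K, y - t • a ∉ A := by
  filter_upwards [eventually_forall_smul_sub_mem_interior hcone ha hK] with t ht y hy hyA
  refine Set.disjoint_left.1 hdisj hyA ?_
  simpa using ht y hy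

end Cone

section TruncatedShift

variable {E F : Type*} [AddGroup E] [MeasurableSpace E] [NormedAddCommGroup F]
  {p : ENNReal} {μ : Measure E} {A : Set E}

/-- `T` is the shift by `x` on `Lᵖ(A)`: it sends `f`, extended by zero off `A`, to the restriction
of `y ↦ f (y - x)` to `A`. Stated as a property of a map on `Lᵖ(A)`, since for a general measure
the formula need not preserve `Lᵖ`. -/
def IsTruncatedShift (x : E) (T : Lp F p (μ.restrict A) → Lp F p (μ.restrict A)) : Prop :=
  ∀ f, T f =ᵐ[μ.restrict A] fun y => A.indicator f (y - x)

namespace IsTruncatedShift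

theorem ae_apply_eq_zero_of_sub_notMem {x : E}
    {T : Lp F p (μ.restrict A) → Lp F p (μ.restrict A)} (hT : IsTruncatedShift x T)
    (f : Lp F p (μ.restrict A)) : ∀ᵐ y ∂μ.restrict A, y - x ∉ A → T f y = 0 :=
  (hT f).mono fun _ hy hyA => hy.trans (Set.indicator_of_notMem hyA _)

theorem eq_zero_of_forall_mem_range {ι : Type*} [Countable ι] {x : ι → E}
    {T : ι → Lp F p (μ.restrict A) → Lp F p (μ.restrict A)}
    (hT : ∀ i, IsTruncatedShift (x i) (T i)) (hx : ∀ y, ∃ i, y - x i ∉ A)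
    {f : Lp F p (μ.restrict A)} (hf : ∀ i, f ∈ Set.range (T i)) : f = 0 := by
  have hvanish : ∀ i, ∀ᵐ y ∂μ.restrict A, y - x i ∉ A → f y = 0 := fun i => by
    obtain ⟨g, rfl⟩ := hf i
    exact (hT i).ae_apply_eq_zero_of_sub_notMem g
  rw [Lp.eq_zero_iff_ae_eq_zero]
  filter_upwards [ae_all_iff.2 hvanish] with y hy
  obtain ⟨i, hi⟩ := hx y
  exact hy i hi

theorem adjoint_apply_eq_zero {𝕜 : Type*} [RCLike 𝕜] [InnerProductSpace 𝕜 F] [CompleteSpace F]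
    {x : E} {T : Lp F 2 (μ.restrict A) →L[𝕜] Lp F 2 (μ.restrict A)} (hT : IsTruncatedShift x T)
    {f : Lp F 2 (μ.restrict A)} (hf : ∀ᵐ y ∂μ.restrict A, y - x ∈ A → f y = 0) :
    adjoint T f = 0 := by
  refine ext_inner_right 𝕜 fun g => ?_
  rw [adjoint_inner_left, inner_zero_left, L2.inner_def]
  refine integral_eq_zero_of_ae ?_
  filter_upwards [hf, hT.ae_apply_eq_zero_of_sub_notMem g] with y hfy hgy
  by_cases hy : y - x ∈ A
  · simp [hfy hy]
  · simp [hgy hy]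

end IsTruncatedShift

end TruncatedShift

section Representation

open Filter Bornology
open scoped Pointwise

variable {E F : Type*} [AddCommGroup E] [Module ℝ E] [TopologicalSpace E]
  [IsTopologicalAddGroup E] [MeasurableSpace E] [NormedAddCommGroup F]
  {μ : Measure E} {P A : Set E} {a : E}

theorem exists_forall_ge_adjoint_shift_eq_zero [ContinuousConstSMul ℝ E] {𝕜 : Type*} [RCLike 𝕜]
    [InnerProductSpace 𝕜 F] [CompleteSpace F]
    (hcone : ∀ c : ℝ, 0 < c → ∀ x ∈ P, c • x ∈ P) (hdisj : Disjoint A (-interior P))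
    {S : E → Lp F 2 (μ.restrict A) →L[𝕜] Lp F 2 (μ.restrict A)}
    (hS : ∀ x ∈ P, IsTruncatedShift x (S x)) (ha : a ∈ interior P)
    {K : Set E} (hK : IsVonNBounded ℝ K) {f : Lp F 2 (μ.restrict A)}
    (hf : ∀ᵐ y ∂μ.restrict A, y ∉ K → f y = 0) :
    ∃ t₀ : ℝ, 0 ≤ t₀ ∧ ∀ t ≥ t₀, adjoint (S (t • a)) f = 0 := by
  have hzero : ∀ᶠ t : ℝ in atTop, adjoint (S (t • a)) f = 0 := by
    filter_upwards [eventually_forall_sub_smul_notMem hcone hdisj ha hK, eventually_gt_atTop 0]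
      with t hKt ht
    refine (hS _ (hcone t ht a (interior_subset ha))).adjoint_apply_eq_zero (hf.mono ?_)
    exact fun y hy hyA => hy fun hyK => hKt y hyK hyA
  obtain ⟨t₀, ht₀⟩ := eventually_atTop.1 hzero
  exact ⟨max t₀ 0, le_max_right _ _, fun t ht => ht₀ t (le_of_max_le_left ht)⟩

theorem iInter_range_shift_eq_singleton_zero [ContinuousSMul ℝ E] {𝕜 : Type*} [NormedField 𝕜]
    [NormedSpace 𝕜 F] {p : ENNReal} [Fact (1 ≤ p)]
    (hcone : ∀ c : ℝ, 0 < c → ∀ x ∈ P, c • x ∈ P) (hdisj : Disjoint A (-interior P))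
    {S : E → Lp F p (μ.restrict A) →L[𝕜] Lp F p (μ.restrict A)}
    (hS : ∀ x ∈ P, IsTruncatedShift x (S x)) (ha : a ∈ interior P) :
    (⋂ t ∈ Set.Ici (0 : ℝ), Set.range (S (t • a))) = {0} := by
  refine Set.Subset.antisymm (fun f hf => ?_) ?_
  · have hshift : ∀ n : ℕ, IsTruncatedShift (((n : ℝ) + 1) • a) (S (((n : ℝ) + 1) • a)) :=
      fun n => hS _ (hcone _ n.cast_add_one_pos a (interior_subset ha))
    refine IsTruncatedShift.eq_zero_of_forall_mem_range hshift (fun y => ?_)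
      fun n => Set.mem_iInter₂.1 hf _ (Set.mem_Ici.2 n.cast_add_one_pos.le)
    have hescape : ∀ᶠ t : ℝ in atTop, y - t • a ∉ A :=
      (eventually_forall_sub_smul_notMem hcone hdisj ha (isVonNBounded_singleton y)).mono
        fun t ht => ht y rfl
    exact ((tendsto_natCast_atTop_atTop.atTop_add tendsto_const_nhds).eventually hescape).exists
  · exact Set.singleton_subset_iff.2 (Set.mem_iInter₂.2 fun t _ => ⟨0, map_zero _⟩)

theorem shift_representation_pure_general [ContinuousSMul ℝ E] {𝕜 : Type*} [RCLike 𝕜]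
    [InnerProductSpace 𝕜 F] [CompleteSpace F]
    (hcone : ∀ c : ℝ, 0 < c → ∀ x ∈ P, c • x ∈ P) (hdisj : Disjoint A (-interior P))
    {S : E → Lp F 2 (μ.restrict A) →L[𝕜] Lp F 2 (μ.restrict A)}
    (hS : ∀ x ∈ P, IsTruncatedShift x (S x)) :
    (∀ (K : Set E), IsVonNBounded ℝ K → ∀ f : Lp F 2 (μ.restrict A),
        (∀ᵐ y ∂μ.restrict A, y ∉ K → f y = 0) →
      ∀ a ∈ interior P, ∃ t₀ : ℝ, 0 ≤ t₀ ∧ ∀ t ≥ t₀, adjoint (S (t • a)) f = 0) ∧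
    (∀ a ∈ interior P, (⋂ t ∈ Set.Ici (0 : ℝ), Set.range (S (t • a))) = {0}) :=
  ⟨fun _ hK _ hf _ ha => exists_forall_ge_adjoint_shift_eq_zero hcone hdisj hS ha hK hf,
    fun _ ha => iInter_range_shift_eq_singleton_zero hcone hdisj hS ha⟩

end Representation

/-- For the shift isometric representation of a closed spanning pointed convex cone `P`
on `L²(A)`, where `A ≠ ℝ^d` is a `P`-module with `A ∩ (-Ω) = ∅`: for every continuous
compactly supported `φ` with support in the interior of `A` and every `a` in the interior
of `P`, `(S^A_{ta})^* φ = 0` for all sufficiently large `t`; consequently the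
representation is pure. -/
theorem shift_representation_pure {d : ℕ}
    (P A : Set (EuclideanSpace ℝ (Fin d)))
    (hclosed : IsClosed P) (hconv : Convex ℝ P)
    (hcone : ∀ (c : ℝ), 0 ≤ c → ∀ x ∈ P, c • x ∈ P)
    (hspan : ∀ x : EuclideanSpace ℝ (Fin d), ∃ a ∈ P, ∃ b ∈ P, x = a - b)
    (hpointed : P ∩ (-P) = {0})
    (hA_ne : A.Nonempty) (hA_closed : IsClosed A)
    (hA_mod : ∀ x ∈ A, ∀ p ∈ P, x + p ∈ A)
    (hA_proper : A ≠ Set.univ)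
    (hA_disj : A ∩ (-(interior P)) = ∅)
    (S : EuclideanSpace ℝ (Fin d) →
      (Lp ℂ 2 (volume.restrict A) →L[ℂ] Lp ℂ 2 (volume.restrict A)))
    (hS : ∀ x ∈ P, ∀ f : Lp ℂ 2 (volume.restrict A),
      (S x f : EuclideanSpace ℝ (Fin d) → ℂ) =ᵐ[volume.restrict A]
        fun y => Set.indicator A (⇑f) (y - x)) :
    (∀ (φ : EuclideanSpace ℝ (Fin d) → ℂ), Continuous φ → HasCompactSupport φ →
        tsupport φ ⊆ interior A →
      ∀ fφ : Lp ℂ 2 (volume.restrict A),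
        (fφ : EuclideanSpace ℝ (Fin d) → ℂ) =ᵐ[volume.restrict A] φ →
      ∀ a ∈ interior P, ∃ t₀ : ℝ, 0 ≤ t₀ ∧ ∀ t ≥ t₀,
        ContinuousLinearMap.adjoint (S (t • a)) fφ = 0) ∧
    (∀ a ∈ interior P, (⋂ t ∈ Set.Ici (0 : ℝ), Set.range (S (t • a))) = {0}) := by
  obtain ⟨hadjoint, hpure⟩ := shift_representation_pure_general
    (fun c hc => hcone c hc.le) (Set.disjoint_iff_inter_eq_empty.2 hA_disj) hS
  exact ⟨fun φ _ hφ _ fφ hfφ => hadjoint (tsupport φ) (hφ.isCompact.isVonNBounded ℝ) fφ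
    (hfφ.mono fun y hy hyK => hy.trans (image_eq_zero_of_notMem_tsupport hyK)), hpure⟩
end

section
/- Let u be a bounded operator on L²(ℝ₊^d) ⊗ k commuting with all the shift isometries S_x and their adjoints S_x* (x ∈ ℝ₊^d). Then u = 1_{L²(ℝ₊^d)} ⊗ v for some bounded operator v on k. In other words, the commutant of the von Neumann algebra generated by {S_x : x ∈ ℝ₊^d} is {1 ⊗ T : T ∈ B(k)}. -/
open MeasureTheory ContinuousLinearMap

/-!
Let `χ y = exp (-∑ i, y i)`. The adjoint of `S x` is `f ↦ f (· + x)`, so `χ ⊗ ξ` is an eigenvector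
of every `(S x)†` with eigenvalue `χ x`. Conversely, if `(S x)† f = χ x • f` for all `x`, then
`f / χ` is invariant under translations by the orthant, hence almost everywhere constant, and
`f = χ ⊗ ξ`. Since `u` commutes with the adjoints, it maps `χ ⊗ k` into itself, that is,
`u (χ ⊗ ξ) = χ ⊗ v ξ` with `v` bounded; since it commutes with the shifts, it agrees with `1 ⊗ v`
on all `S x (χ ⊗ ξ)`. These vectors are total: if `f` is orthogonal to them, then `χ f` has zero
integral over every translated orthant, and translated orthants form a generating π-system.
-/

section Factorization

variable {𝕜 F G H : Type*} [NontriviallyNormedField 𝕜]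
  [NormedAddCommGroup F] [NormedSpace 𝕜 F] [CompleteSpace F]
  [NormedAddCommGroup G] [NormedSpace 𝕜 G]
  [NormedAddCommGroup H] [NormedSpace 𝕜 H] [CompleteSpace H]

theorem exists_comp_eq_of_forall_mem_range {T : F →L[𝕜] H} (hinj : Function.Injective T)
    (hclosed : IsClosed (Set.range T)) {A : G →L[𝕜] H} (hA : ∀ x, A x ∈ Set.range T) :
    ∃ v : G →L[𝕜] F, T ∘L v = A := by
  refine ⟨(T.equivRange hinj hclosed).symm ∘L A.codRestrict T.range hA, ?_⟩
  ext x
  exact congrArg Subtype.val ((T.equivRange hinj hclosed).apply_symm_apply ⟨A x, hA x⟩)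

end Factorization

section ElementaryTensor

variable {α 𝕜 F : Type*} [MeasurableSpace α] {μ : Measure α} {p : ENNReal} [Fact (1 ≤ p)]
  [NontriviallyNormedField 𝕜] [NormedAddCommGroup F] [NormedSpace 𝕜 F]

/-- The map `ξ ↦ φ ⊗ ξ` from `F` to `L^p(μ, F)`, where `φ ⊗ ξ` is the function `y ↦ φ y • ξ`. -/
noncomputable def elementaryTensor (φ : Lp 𝕜 p μ) : F →L[𝕜] Lp F p μ :=
  (compLpL₂ p μ (lsmul 𝕜 𝕜).flip).flip φ

theorem coeFn_elementaryTensor (φ : Lp 𝕜 p μ) (ξ : F) :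
    elementaryTensor φ ξ =ᵐ[μ] fun y => φ y • ξ :=
  coeFn_compLp _ φ

theorem coeFn_elementaryTensor_toLp {φ : α → 𝕜} (hφ : MemLp φ p μ) (ξ : F) :
    elementaryTensor (hφ.toLp φ) ξ =ᵐ[μ] fun y => φ y • ξ := by
  filter_upwards [coeFn_elementaryTensor (hφ.toLp φ) ξ, hφ.coeFn_toLp] with y hy hφy
  rw [hy, hφy]

theorem compLp_elementaryTensor {G : Type*} [NormedAddCommGroup G] [NormedSpace 𝕜 G]
    (v : F →L[𝕜] G) (φ : Lp 𝕜 p μ) (ξ : F) :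
    v.compLp (elementaryTensor φ ξ) = elementaryTensor φ (v ξ) := by
  apply Lp.ext
  filter_upwards [v.coeFn_compLp (elementaryTensor φ ξ), coeFn_elementaryTensor φ ξ,
    coeFn_elementaryTensor φ (v ξ)] with y hv hξ hvξ
  rw [hv, hξ, hvξ, map_smul]

end ElementaryTensor

section ElementaryTensorNorm

variable {α 𝕜 F : Type*} [MeasurableSpace α] {μ : Measure α} {p : ENNReal} [Fact (1 ≤ p)]
  [RCLike 𝕜] [NormedAddCommGroup F] [NormedSpace 𝕜 F]

theorem norm_elementaryTensor (φ : Lp 𝕜 p μ) (ξ : F) :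
    ‖elementaryTensor φ ξ‖ = ‖φ‖ * ‖ξ‖ := by
  have hnorm : ∀ᵐ y ∂μ, ‖elementaryTensor φ ξ y‖ = ‖((‖ξ‖ : 𝕜) • φ : Lp 𝕜 p μ) y‖ := by
    filter_upwards [coeFn_elementaryTensor φ ξ, Lp.coeFn_smul (‖ξ‖ : 𝕜) φ] with y hξ hsmul
    rw [hξ, hsmul, Pi.smul_apply, norm_smul, norm_smul, RCLike.norm_ofReal, abs_norm, mul_comm]
  calc ‖elementaryTensor φ ξ‖ = ‖(‖ξ‖ : 𝕜) • φ‖ :=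
        le_antisymm (Lp.norm_le_norm_of_ae_le (hnorm.mono fun _ h => h.le))
          (Lp.norm_le_norm_of_ae_le (hnorm.mono fun _ h => h.ge))
    _ = ‖φ‖ * ‖ξ‖ := by rw [norm_smul, RCLike.norm_ofReal, abs_norm, mul_comm]

theorem antilipschitz_elementaryTensor {φ : Lp 𝕜 p μ} (hφ : φ ≠ 0) :
    AntilipschitzWith ‖φ‖₊⁻¹ (elementaryTensor φ : F →L[𝕜] Lp F p μ) :=
  ContinuousLinearMap.antilipschitz_of_bound _ fun ξ => by
    rw [norm_elementaryTensor, NNReal.coe_inv, coe_nnnorm,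
      inv_mul_cancel_left₀ (norm_ne_zero_iff.2 hφ)]

end ElementaryTensorNorm

section Translation

variable {E : Type*} [AddGroup E] [MeasurableSpace E] [MeasurableAdd E]
  {μ : Measure E} [μ.IsAddRightInvariant] {Q : AddSubmonoid E}

theorem map_add_right_restrict_le (hQ : MeasurableSet (Q : Set E)) {x : E} (hx : x ∈ Q) :
    (μ.restrict Q).map (· + x) ≤ μ.restrict Q :=
  calc (μ.restrict Q).map (· + x) ≤ (μ.restrict ((· + x) ⁻¹' Q)).map (· + x) :=
        Measure.map_mono (Measure.restrict_mono (fun _ hy => Q.add_mem hy hx) le_rfl)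
          (measurable_add_const x)
    _ = μ.restrict Q := by
        rw [← Measure.restrict_map (measurable_add_const x) hQ, map_add_right_eq_self]

theorem quasiMeasurePreserving_add_right_restrict (hQ : MeasurableSet (Q : Set E)) {x : E}
    (hx : x ∈ Q) : Measure.QuasiMeasurePreserving (· + x) (μ.restrict Q) (μ.restrict Q) :=
  ⟨measurable_add_const x, (map_add_right_restrict_le hQ hx).absolutelyContinuous⟩

theorem memLp_comp_add_right {F : Type*} [NormedAddCommGroup F] {p : ENNReal}
    (hQ : MeasurableSet (Q : Set E)) {x : E} (hx : x ∈ Q) {f : E → F}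
    (hf : MemLp f p (μ.restrict Q)) : MemLp (fun y => f (y + x)) p (μ.restrict Q) :=
  (hf.mono_measure (map_add_right_restrict_le hQ hx)).comp_of_map
    (measurable_add_const x).aemeasurable

end Translation

section Constancy

variable {E X : Type*} [MeasurableSpace E] [TopologicalSpace X]
  [TopologicalSpace.MetrizableSpace X]

theorem ae_ae_add_eq_of_forall_ae_add_eq [Add E] [MeasurableAdd₂ E] {μ : Measure E} [SFinite μ]
    {Q : Set E} (hQ : MeasurableSet Q) {g : E → X} (hg : StronglyMeasurable g)
    (hinv : ∀ x ∈ Q, ∀ᵐ y ∂μ.restrict Q, g (y + x) = g y) :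
    ∀ᵐ y ∂μ.restrict Q, ∀ᵐ x ∂μ.restrict Q, g (y + x) = g y := by
  have hmeas : MeasurableSet {z : E × E | g (z.2 + z.1) = g z.2} :=
    (hg.comp_measurable (measurable_snd.add measurable_fst)).measurableSet_eq_fun
      (hg.comp_measurable measurable_snd)
  exact (Measure.ae_ae_comm hmeas).1 (ae_restrict_of_forall_mem hQ hinv)

theorem exists_ae_eq_const_of_forall_ae_add_eq [AddCommGroup E] [MeasurableAdd₂ E]
    {μ : Measure E} [SFinite μ] [μ.IsAddRightInvariant] {Q : AddSubmonoid E}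
    (hQ : MeasurableSet (Q : Set E)) {g : E → X} (hg : AEStronglyMeasurable g (μ.restrict Q))
    (hinv : ∀ x ∈ Q, ∀ᵐ y ∂μ.restrict Q, g (y + x) = g y) :
    ∃ c, ∀ᵐ y ∂μ.restrict Q, g y = c := by
  rcases eq_or_ne (μ.restrict Q) 0 with hzero | hne
  · exact ⟨g 0, by simp [hzero]⟩
  have := ae_neBot.2 hne
  have hshift {x : E} (hx : x ∈ Q) := quasiMeasurePreserving_add_right_restrict (μ := μ) hQ hx
  have hinv_mk : ∀ᵐ y ∂μ.restrict Q, ∀ᵐ x ∂μ.restrict Q, hg.mk g (y + x) = hg.mk g y := by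
    refine ae_ae_add_eq_of_forall_ae_add_eq hQ hg.stronglyMeasurable_mk fun x hx => ?_
    filter_upwards [hinv x hx, hg.ae_eq_mk, (hshift hx).ae hg.ae_eq_mk] with y hxy hy hyx
    rw [← hyx, hxy, hy]
  have hmem : ∀ᵐ y ∂μ.restrict Q, y ∈ Q := ae_restrict_mem hQ
  obtain ⟨a, ha, haQ⟩ := (hinv_mk.and hmem).exists
  refine ⟨hg.mk g a, ?_⟩
  filter_upwards [hinv_mk, hmem, hg.ae_eq_mk] with y hy hyQ hgy
  obtain ⟨z, haz, hyz⟩ := (((hshift hyQ).ae ha).and ((hshift haQ).ae hy)).exists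
  rw [hgy, ← haz, ← hyz, add_left_comm, add_left_comm a, add_comm a]

end Constancy

theorem toLp_addChar_ne_zero {E 𝕜 : Type*} [AddGroup E] [MeasurableSpace E] [NormedField 𝕜]
    {μ : Measure E} (hμ : μ ≠ 0) {p : ENNReal} {χ : AddChar E 𝕜} (hχ : MemLp χ p μ) :
    hχ.toLp χ ≠ 0 := by
  have := ae_neBot.2 hμ
  intro hzero
  obtain ⟨y, hy⟩ := (hχ.coeFn_toLp.symm.trans (Lp.eq_zero_iff_ae_eq_zero.1 hzero)).exists
  exact (χ.val_isUnit y).ne_zero hy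

/-- `S` is the shift by `x` on `L^p(Q, F)`: it translates a function by `x`, with the value `0`
where the translated argument leaves `Q`. -/
def IsShift {E F : Type*} [Sub E] [MeasurableSpace E] [NormedAddCommGroup F] {μ : Measure E}
    {p : ENNReal} (Q : Set E) (x : E)
    (S : Lp F p (μ.restrict Q) → Lp F p (μ.restrict Q)) : Prop :=
  ∀ f : Lp F p (μ.restrict Q), S f =ᵐ[μ.restrict Q] fun y => Q.indicator f (y - x)

namespace IsShift

section Basic

variable {E F : Type*} [AddGroup E] [MeasurableSpace E] [MeasurableAdd E] [NormedAddCommGroup F]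
  {μ : Measure E} [μ.IsAddRightInvariant] {p : ENNReal} {Q : Set E} {x : E}
  {S : Lp F p (μ.restrict Q) → Lp F p (μ.restrict Q)}

theorem ae_eq_of_ae_eq (hS : IsShift Q x S) (hQ : MeasurableSet Q) {f : Lp F p (μ.restrict Q)}
    {g : E → F} (hfg : f =ᵐ[μ.restrict Q] g) :
    S f =ᵐ[μ.restrict Q] fun y => Q.indicator g (y - x) := by
  have hind : Q.indicator f =ᵐ[μ] Q.indicator g :=
    (ae_eq_restrict_iff_indicator_ae_eq hQ).1 hfg
  have hsub := (measurePreserving_sub_right μ x).quasiMeasurePreserving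
  exact (hS f).trans (ae_restrict_of_ae (hsub.ae_eq_comp hind))

theorem compLp_apply {𝕜 : Type*} [NontriviallyNormedField 𝕜] [NormedSpace 𝕜 F]
    (hS : IsShift Q x S) (hQ : MeasurableSet Q) (v : F →L[𝕜] F) (f : Lp F p (μ.restrict Q)) :
    v.compLp (S f) = S (v.compLp f) := by
  apply Lp.ext
  filter_upwards [v.coeFn_compLp (S f), hS f, hS.ae_eq_of_ae_eq hQ (v.coeFn_compLp f)]
    with y hv hf hvf
  rw [hv, hf, hvf]
  exact congrFun (Set.indicator_comp_of_zero (map_zero v)).symm (y - x)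

end Basic

section Adjoint

variable {E F 𝕜 : Type*} [RCLike 𝕜] [AddGroup E] [MeasurableSpace E] [MeasurableAdd E]
  [NormedAddCommGroup F] [InnerProductSpace 𝕜 F]
  {μ : Measure E} [μ.IsAddRightInvariant] {Q : AddSubmonoid E} {x : E}
  {S : Lp F 2 (μ.restrict Q) →L[𝕜] Lp F 2 (μ.restrict Q)}

theorem integral_inner_apply_right (hS : IsShift (Q : Set E) x S)
    (hQ : MeasurableSet (Q : Set E)) (hx : x ∈ Q) (f g : Lp F 2 (μ.restrict Q)) :
    ∫ y in Q, inner 𝕜 (f y) (S g y) ∂μ = ∫ y in Q, inner 𝕜 (f (y + x)) (g y) ∂μ := by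
  have hpointwise (y : E) :
      (Q : Set E).indicator (fun z => inner 𝕜 (f z) ((Q : Set E).indicator g (z - x))) y =
        (Q : Set E).indicator (fun z => inner 𝕜 (f (z + x)) (g z)) (y - x) := by
    by_cases hy : y - x ∈ (Q : Set E)
    · have hyQ : y ∈ (Q : Set E) := by simpa using Q.add_mem hy hx
      simp [Set.indicator_of_mem hy, Set.indicator_of_mem hyQ]
    · simp [Set.indicator_of_notMem hy]
  calc ∫ y in Q, inner 𝕜 (f y) (S g y) ∂μ
      = ∫ y in Q, inner 𝕜 (f y) ((Q : Set E).indicator g (y - x)) ∂μ :=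
        integral_congr_ae ((hS g).mono fun y hy => congrArg (inner 𝕜 (f y)) hy)
    _ = ∫ y, (Q : Set E).indicator (fun z => inner 𝕜 (f (z + x)) (g z)) (y - x) ∂μ := by
        rw [← integral_indicator hQ]
        exact integral_congr_ae (.of_forall hpointwise)
    _ = ∫ y in Q, inner 𝕜 (f (y + x)) (g y) ∂μ := by
        rw [integral_sub_right_eq_self, integral_indicator hQ]

theorem coeFn_adjoint_apply [CompleteSpace F] (hS : IsShift (Q : Set E) x S)
    (hQ : MeasurableSet (Q : Set E)) (hx : x ∈ Q) (f : Lp F 2 (μ.restrict Q)) :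
    adjoint S f =ᵐ[μ.restrict Q] fun y => f (y + x) := by
  have hmem : MemLp (fun y => f (y + x)) 2 (μ.restrict Q) :=
    memLp_comp_add_right hQ hx (Lp.memLp f)
  suffices hadj : adjoint S f = hmem.toLp _ from hadj ▸ hmem.coeFn_toLp
  refine ext_inner_right 𝕜 fun g => ?_
  rw [adjoint_inner_left, L2.inner_def, L2.inner_def, hS.integral_inner_apply_right hQ hx]
  exact integral_congr_ae (hmem.coeFn_toLp.mono fun y hy => congrArg (inner 𝕜 · (g y)) hy.symm)

end Adjoint

section Eigenvectors

variable {E F 𝕜 : Type*} [RCLike 𝕜] [AddCommGroup E] [MeasurableSpace E]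
  [NormedAddCommGroup F] [InnerProductSpace 𝕜 F] [CompleteSpace F]
  {μ : Measure E} [μ.IsAddRightInvariant] {Q : AddSubmonoid E} {χ : AddChar E 𝕜}

theorem adjoint_apply_elementaryTensor [MeasurableAdd E] {x : E}
    {S : Lp F 2 (μ.restrict Q) →L[𝕜] Lp F 2 (μ.restrict Q)} (hS : IsShift (Q : Set E) x S)
    (hQ : MeasurableSet (Q : Set E)) (hx : x ∈ Q) (hχ : MemLp χ 2 (μ.restrict Q)) (ξ : F) :
    adjoint S (elementaryTensor (hχ.toLp χ) ξ) = χ x • elementaryTensor (hχ.toLp χ) ξ := by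
  have hξ := coeFn_elementaryTensor_toLp hχ ξ
  apply Lp.ext
  filter_upwards [hS.coeFn_adjoint_apply hQ hx (elementaryTensor (hχ.toLp χ) ξ), hξ,
    (quasiMeasurePreserving_add_right_restrict hQ hx).ae hξ,
    Lp.coeFn_smul (χ x) (elementaryTensor (hχ.toLp χ) ξ)] with y hadj hy hyx hsmul
  rw [hadj, hsmul, hyx, Pi.smul_apply, hy, smul_smul, AddChar.map_add_eq_mul, mul_comm]

theorem mem_range_elementaryTensor_of_adjoint_apply [MeasurableAdd₂ E] [SFinite μ]
    {S : E → (Lp F 2 (μ.restrict Q) →L[𝕜] Lp F 2 (μ.restrict Q))}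
    (hS : ∀ x ∈ Q, IsShift (Q : Set E) x (S x)) (hQ : MeasurableSet (Q : Set E))
    (hχ : MemLp χ 2 (μ.restrict Q)) {f : Lp F 2 (μ.restrict Q)}
    (hf : ∀ x ∈ Q, adjoint (S x) f = χ x • f) :
    f ∈ Set.range (elementaryTensor (hχ.toLp χ) : F →L[𝕜] Lp F 2 (μ.restrict Q)) := by
  have hχ_ne (y : E) : χ y ≠ 0 := (χ.val_isUnit y).ne_zero
  have hmeas : AEStronglyMeasurable (fun y => (χ y)⁻¹ • f y) (μ.restrict Q) :=
    hχ.1.inv₀.smul (Lp.aestronglyMeasurable f)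
  have hinv : ∀ x ∈ Q, ∀ᵐ y ∂μ.restrict Q, (χ (y + x))⁻¹ • f (y + x) = (χ y)⁻¹ • f y := by
    intro x hx
    filter_upwards [(hS x hx).coeFn_adjoint_apply hQ hx f, Lp.coeFn_smul (χ x) f]
      with y hadj hsmul
    rw [← hadj, hf x hx, hsmul, Pi.smul_apply, smul_smul, AddChar.map_add_eq_mul, mul_inv,
      inv_mul_cancel_right₀ (hχ_ne x)]
  obtain ⟨ξ, hξ⟩ := exists_ae_eq_const_of_forall_ae_add_eq hQ hmeas hinv
  refine ⟨ξ, Lp.ext ?_⟩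
  filter_upwards [hξ, coeFn_elementaryTensor_toLp hχ ξ] with y hy hχξ
  rw [hχξ, ← hy, smul_inv_smul₀ (hχ_ne y)]

theorem exists_apply_elementaryTensor_eq [MeasurableAdd₂ E] [SFinite μ]
    {S : E → (Lp F 2 (μ.restrict Q) →L[𝕜] Lp F 2 (μ.restrict Q))}
    (hS : ∀ x ∈ Q, IsShift (Q : Set E) x (S x)) (hQ : MeasurableSet (Q : Set E))
    (hμ : μ.restrict Q ≠ 0) (hχ : MemLp χ 2 (μ.restrict Q))
    {u : Lp F 2 (μ.restrict Q) →L[𝕜] Lp F 2 (μ.restrict Q)}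
    (hu : ∀ x ∈ Q, u ∘L adjoint (S x) = adjoint (S x) ∘L u) :
    ∃ v : F →L[𝕜] F, ∀ ξ,
      u (elementaryTensor (hχ.toLp χ) ξ) = elementaryTensor (hχ.toLp χ) (v ξ) := by
  set T : F →L[𝕜] Lp F 2 (μ.restrict Q) := elementaryTensor (hχ.toLp χ)
  have hT : AntilipschitzWith ‖hχ.toLp χ‖₊⁻¹ T :=
    antilipschitz_elementaryTensor (toLp_addChar_ne_zero hμ hχ)
  have hrange (ξ : F) : (u ∘L T) ξ ∈ Set.range T := by
    refine mem_range_elementaryTensor_of_adjoint_apply hS hQ hχ fun x hx => ?_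
    calc adjoint (S x) (u (T ξ)) = u (adjoint (S x) (T ξ)) :=
          (DFunLike.congr_fun (hu x hx) (T ξ)).symm
      _ = χ x • u (T ξ) := by
          rw [(hS x hx).adjoint_apply_elementaryTensor hQ hx hχ, map_smul]
  obtain ⟨v, hv⟩ := exists_comp_eq_of_forall_mem_range hT.injective
    (hT.isClosed_range T.uniformContinuous) hrange
  exact ⟨v, fun ξ => (DFunLike.congr_fun hv ξ).symm⟩

end Eigenvectors

section Orthogonality

variable {E F 𝕜 : Type*} [RCLike 𝕜] [AddGroup E] [MeasurableSpace E] [MeasurableAdd E]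
  [NormedAddCommGroup F] [InnerProductSpace 𝕜 F] [NormedSpace ℝ F] [CompleteSpace F]
  {μ : Measure E} [μ.IsAddRightInvariant] {Q : Set E} {χ : AddChar E 𝕜} {x : E}
  {S : Lp F 2 (μ.restrict Q) →L[𝕜] Lp F 2 (μ.restrict Q)}

theorem inner_apply_elementaryTensor (hS : IsShift Q x S) (hQ : MeasurableSet Q)
    (hχ : MemLp χ 2 (μ.restrict Q)) (ξ : F) (f : Lp F 2 (μ.restrict Q)) :
    inner 𝕜 (S (elementaryTensor (hχ.toLp χ) ξ)) f =
      star (χ (-x)) * inner 𝕜 ξ (∫ y in {y | y - x ∈ Q}, star (χ y) • f y ∂μ.restrict Q) := by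
  have hint : Integrable (fun y => star (χ y) • f y) (μ.restrict Q) :=
    memLp_one_iff_integrable.1 ((Lp.memLp f).smul hχ.star)
  have htranslate : MeasurableSet {y | y - x ∈ Q} :=
    hQ.preimage (measurePreserving_sub_right μ x).measurable
  rw [L2.inner_def, ← integral_inner hint.integrableOn, ← integral_indicator htranslate,
    ← integral_const_mul]
  refine integral_congr_ae ?_
  filter_upwards [hS.ae_eq_of_ae_eq hQ (coeFn_elementaryTensor_toLp hχ ξ)] with y hy
  by_cases hyQ : y - x ∈ Q
  · have hyQ' : y ∈ {y | y - x ∈ Q} := hyQ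
    rw [hy, Set.indicator_of_mem hyQ, Set.indicator_of_mem hyQ', inner_smul_left,
      inner_smul_right, ← mul_assoc, ← star_mul, ← AddChar.map_add_eq_mul, ← sub_eq_add_neg]
    rfl
  · have hyQ' : y ∉ {y | y - x ∈ Q} := hyQ
    rw [hy, Set.indicator_of_notMem hyQ, Set.indicator_of_notMem hyQ', inner_zero_left, mul_zero]

end Orthogonality

end IsShift

section GeneratingPiSystem

theorem ae_eq_zero_of_forall_setIntegral_eq_zero_of_generateFrom {α F : Type*}
    {m : MeasurableSpace α} {μ : Measure α} [NormedAddCommGroup F] [NormedSpace ℝ F]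
    [CompleteSpace F] {C : Set (Set α)} (hgen : m = MeasurableSpace.generateFrom C)
    (hpi : IsPiSystem C) {f : α → F} (hf : Integrable f μ) (huniv : ∫ y, f y ∂μ = 0)
    (hC : ∀ s ∈ C, ∫ y in s, f y ∂μ = 0) : f =ᵐ[μ] 0 := by
  refine hf.ae_eq_of_withDensityᵥ_eq (integrable_zero α F μ) ?_
  rw [withDensityᵥ_zero]
  refine VectorMeasure.ext_of_generateFrom C (fun s hs => ?_) hgen hpi ?_
  · have hsm : MeasurableSet s := hgen ▸ MeasurableSpace.measurableSet_generateFrom hs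
    rw [withDensityᵥ_apply hf hsm, hC s hs, zero_apply]
  · rw [withDensityᵥ_apply hf .univ, setIntegral_univ, huniv, zero_apply]

theorem isPiSystem_range_Ici {α : Type*} [SemilatticeSup α] :
    IsPiSystem (Set.range (Set.Ici : α → Set α)) := by
  rintro _ ⟨a, rfl⟩ _ ⟨b, rfl⟩ -
  exact ⟨a ⊔ b, Set.Ici_inter_Ici.symm⟩

theorem isCountablySpanning_range_Ici {α : Type*} [LinearOrder α] [Nonempty α]
    [(Filter.atBot : Filter α).IsCountablyGenerated] :
    IsCountablySpanning (Set.range (Set.Ici : α → Set α)) := by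
  obtain ⟨a, ha⟩ := Filter.exists_seq_tendsto (Filter.atBot : Filter α)
  refine ⟨fun n => Set.Ici (a n), fun n => Set.mem_range_self _, Set.eq_univ_of_forall fun x => ?_⟩
  obtain ⟨n, hn⟩ := (ha.eventually (Filter.eventually_le_atBot x)).exists
  exact Set.mem_iUnion.2 ⟨n, hn⟩

theorem generateFrom_range_Ici_pi {ι : Type*} [Finite ι] {α : ι → Type*}
    [∀ i, MeasurableSpace (α i)] [∀ i, TopologicalSpace (α i)] [∀ i, BorelSpace (α i)]
    [∀ i, SecondCountableTopology (α i)] [∀ i, LinearOrder (α i)] [∀ i, OrderTopology (α i)]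
    [∀ i, Nonempty (α i)] [∀ i, (Filter.atBot : Filter (α i)).IsCountablyGenerated] :
    MeasurableSpace.generateFrom (Set.range (Set.Ici : (∀ i, α i) → Set (∀ i, α i))) =
      MeasurableSpace.pi := by
  have hrange : Set.univ.pi '' Set.univ.pi (fun i => Set.range (Set.Ici : α i → Set (α i))) =
      Set.range (Set.Ici : (∀ i, α i) → Set (∀ i, α i)) := by
    rw [← Set.range_piMap, ← Set.range_comp]
    exact congrArg Set.range (funext Set.pi_univ_Ici)
  rw [← hrange]
  refine generateFrom_eq_pi (fun i => ?_) fun i => isCountablySpanning_range_Ici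
  rw [← borel_eq_generateFrom_Ici, BorelSpace.measurable_eq (α := α i)]

end GeneratingPiSystem

/-- The closed positive orthant `ℝ₊^ι` of Euclidean space, as an additive submonoid. -/
def orthant (ι : Type*) : AddSubmonoid (EuclideanSpace ℝ ι) where
  carrier := {y | ∀ i, 0 ≤ y i}
  zero_mem' _ := le_rfl
  add_mem' hx hy i := add_nonneg (hx i) (hy i)

section Orthant

variable {ι : Type*}

theorem setOf_sub_mem_orthant (a : EuclideanSpace ℝ ι) :
    {y | y - a ∈ orthant ι} = WithLp.ofLp ⁻¹' Set.Ici (WithLp.ofLp a) :=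
  Set.ext fun _ => forall_congr' fun _ => sub_nonneg

theorem coe_orthant : (orthant ι : Set (EuclideanSpace ℝ ι)) = WithLp.ofLp ⁻¹' Set.Ici 0 :=
  rfl

theorem range_setOf_sub_mem_orthant :
    Set.range (fun a : EuclideanSpace ℝ ι => {y | y - a ∈ orthant ι}) =
      Set.preimage WithLp.ofLp '' Set.range (Set.Ici : (ι → ℝ) → Set (ι → ℝ)) := by
  rw [← Set.range_comp, funext setOf_sub_mem_orthant]
  exact (WithLp.equiv 2 (ι → ℝ)).surjective.range_comp
    (fun a : ι → ℝ => WithLp.ofLp ⁻¹' Set.Ici a)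

theorem isPiSystem_range_setOf_sub_mem_orthant :
    IsPiSystem (Set.range fun a : EuclideanSpace ℝ ι => {y | y - a ∈ orthant ι}) :=
  range_setOf_sub_mem_orthant (ι := ι) ▸ isPiSystem_range_Ici.comap WithLp.ofLp

theorem generateFrom_range_setOf_sub_mem_orthant [Finite ι] :
    MeasurableSpace.generateFrom
        (Set.range fun a : EuclideanSpace ℝ ι => {y | y - a ∈ orthant ι}) =
      WithLp.measurableSpace 2 (ι → ℝ) := by
  rw [range_setOf_sub_mem_orthant, ← MeasurableSpace.comap_generateFrom,
    generateFrom_range_Ici_pi, WithLp.measurableSpace]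

theorem measurableSet_orthant [Finite ι] :
    MeasurableSet (orthant ι : Set (EuclideanSpace ℝ ι)) :=
  measurableSet_Ici.preimage (WithLp.measurable_ofLp 2 (ι → ℝ))

theorem setOf_sub_mem_orthant_inter_orthant (a : EuclideanSpace ℝ ι) :
    {y | y - a ∈ orthant ι} ∩ orthant ι =
      {y | y - WithLp.toLp 2 (WithLp.ofLp a ⊔ 0) ∈ orthant ι} := by
  rw [setOf_sub_mem_orthant, setOf_sub_mem_orthant, coe_orthant, ← Set.preimage_inter,
    Set.Ici_inter_Ici]

theorem ae_eq_zero_of_forall_setIntegral_translate_orthant_eq_zero [Finite ι] {F : Type*}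
    [NormedAddCommGroup F] [NormedSpace ℝ F] [CompleteSpace F]
    {μ : Measure (EuclideanSpace ℝ ι)} {f : EuclideanSpace ℝ ι → F}
    (hf : IntegrableOn f (orthant ι) μ)
    (hzero : ∀ x ∈ orthant ι, ∫ y in {y | y - x ∈ orthant ι}, f y ∂μ.restrict (orthant ι) = 0) :
    f =ᵐ[μ.restrict (orthant ι)] 0 := by
  refine ae_eq_zero_of_forall_setIntegral_eq_zero_of_generateFrom
    generateFrom_range_setOf_sub_mem_orthant.symm isPiSystem_range_setOf_sub_mem_orthant hf ?_ ?_
  · simpa [Measure.restrict_restrict_of_subset] using hzero 0 (orthant ι).zero_mem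
  · rintro _ ⟨a, rfl⟩
    have hpos : WithLp.toLp 2 (WithLp.ofLp a ⊔ 0) ∈ orthant ι := fun i => le_sup_right
    rw [← hzero _ hpos, Measure.restrict_restrict₀' measurableSet_orthant.nullMeasurableSet,
      Measure.restrict_restrict₀' measurableSet_orthant.nullMeasurableSet,
      ← setOf_sub_mem_orthant_inter_orthant, Set.inter_assoc, Set.inter_self]

theorem measurePreserving_ofLp_restrict_orthant [Fintype ι] :
    MeasurePreserving WithLp.ofLp (volume.restrict (orthant ι : Set (EuclideanSpace ℝ ι)))
      (Measure.pi fun _ => volume.restrict (Set.Ici 0)) := by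
  rw [← Measure.restrict_pi_pi, Set.pi_univ_Ici]
  exact (PiLp.volume_preserving_ofLp ι).restrict_preimage measurableSet_Ici

theorem volume_restrict_orthant_ne_zero [Fintype ι] :
    volume.restrict (orthant ι : Set (EuclideanSpace ℝ ι)) ≠ 0 := by
  rw [← Measure.measure_univ_ne_zero, ← Set.preimage_univ (f := WithLp.ofLp),
    (measurePreserving_ofLp_restrict_orthant (ι := ι)).measure_preimage
      MeasurableSet.univ.nullMeasurableSet, Measure.pi_univ]
  simp

end Orthant

section ExponentialCharacter

variable {ι 𝕜 : Type*} [Fintype ι] [RCLike 𝕜]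

variable (ι 𝕜) in
/-- The character `y ↦ exp (-∑ i, y i)` of `ℝ^ι`. It is real-valued, but takes its values in `𝕜` so
that it can be an eigenvalue of operators on spaces over `𝕜`. -/
noncomputable def expNegSum : AddChar (EuclideanSpace ℝ ι) 𝕜 where
  toFun y := ((Real.exp (-∑ i, y i) : ℝ) : 𝕜)
  map_zero_eq_one' := by simp
  map_add_eq_mul' x y := by
    simp only [PiLp.add_apply, Finset.sum_add_distrib, neg_add, Real.exp_add, RCLike.ofReal_mul]

theorem expNegSum_apply (y : EuclideanSpace ℝ ι) :
    expNegSum ι 𝕜 y = ((Real.exp (-∑ i, y i) : ℝ) : 𝕜) :=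
  rfl

theorem continuous_expNegSum : Continuous (expNegSum ι 𝕜) := by
  simp only [funext expNegSum_apply]
  fun_prop

theorem norm_expNegSum_rpow (y : EuclideanSpace ℝ ι) (r : ℝ) :
    ‖expNegSum ι 𝕜 y‖ ^ r = ∏ i, Real.exp (-r * y i) := by
  rw [expNegSum_apply, RCLike.norm_ofReal, Real.abs_exp, ← Real.exp_mul, ← Real.exp_sum,
    ← Finset.mul_sum, mul_comm, mul_neg, neg_mul]

theorem memLp_expNegSum {p : ENNReal} (hp : p ≠ 0) (hp_top : p ≠ ⊤) :
    MemLp (expNegSum ι 𝕜) p (volume.restrict (orthant ι)) := by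
  have hfactor : IntegrableOn (fun t : ℝ => Real.exp (-p.toReal * t)) (Set.Ici 0) :=
    (integrableOn_Ici_iff_integrableOn_Ioi (by simp)).2
      (exp_neg_integrableOn_Ioi 0 (ENNReal.toReal_pos hp hp_top))
  rw [← integrable_norm_rpow_iff continuous_expNegSum.aestronglyMeasurable hp hp_top]
  simp only [norm_expNegSum_rpow]
  exact measurePreserving_ofLp_restrict_orthant.integrable_comp_of_integrable
    (Integrable.fintype_prod fun _ => hfactor)

end ExponentialCharacter

section Commutant

/-- The space `L²(ℝ₊^ι, k)`, realised as the `L²` space of Lebesgue measure restricted to the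
orthant. -/
abbrev OrthantL2 (ι k : Type*) [Fintype ι] [NormedAddCommGroup k] : Type _ :=
  Lp k 2 (volume.restrict (orthant ι : Set (EuclideanSpace ℝ ι)))

variable {ι 𝕜 k : Type*} [Fintype ι] [RCLike 𝕜]
  [NormedAddCommGroup k] [InnerProductSpace 𝕜 k] [CompleteSpace k]
  {S : EuclideanSpace ℝ ι → (OrthantL2 ι k →L[𝕜] OrthantL2 ι k)}

theorem dense_span_shift_elementaryTensor
    (hS : ∀ x ∈ orthant ι, IsShift (orthant ι : Set (EuclideanSpace ℝ ι)) x (S x))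
    {χ : AddChar (EuclideanSpace ℝ ι) 𝕜} (hχ : MemLp χ 2 (volume.restrict (orthant ι))) :
    Dense (Submodule.span 𝕜 {f | ∃ x ∈ orthant ι, ∃ ξ : k,
      S x (elementaryTensor (hχ.toLp χ) ξ) = f} : Set (OrthantL2 ι k)) := by
  let := NormedSpace.restrictScalars ℝ 𝕜 k
  rw [Submodule.dense_iff_topologicalClosure_eq_top, Submodule.topologicalClosure_eq_top_iff,
    Submodule.eq_bot_iff]
  intro f hf
  have hχ_ne (y : EuclideanSpace ℝ ι) : star (χ y) ≠ 0 := star_ne_zero.2 (χ.val_isUnit y).ne_zero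
  have hint : Integrable (fun y => star (χ y) • f y) (volume.restrict (orthant ι)) :=
    memLp_one_iff_integrable.1 ((Lp.memLp f).smul hχ.star)
  have hzero : ∀ x ∈ orthant ι,
      ∫ y in {y | y - x ∈ orthant ι}, star (χ y) • f y ∂volume.restrict (orthant ι) = 0 := by
    intro x hx
    refine ext_inner_left 𝕜 fun ξ => ?_
    have hinner := (hS x hx).inner_apply_elementaryTensor measurableSet_orthant hχ ξ f
    rw [hf _ (Submodule.subset_span ⟨x, hx, ξ, rfl⟩), zero_eq_mul] at hinner
    rw [inner_zero_right]
    exact hinner.resolve_left (hχ_ne (-x))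
  rw [Lp.eq_zero_iff_ae_eq_zero]
  filter_upwards [ae_eq_zero_of_forall_setIntegral_translate_orthant_eq_zero hint hzero] with y hy
  exact (smul_eq_zero.1 hy).resolve_left (hχ_ne y)

theorem shift_commutant_general {u : OrthantL2 ι k →L[𝕜] OrthantL2 ι k}
    (hS : ∀ x ∈ orthant ι, IsShift (orthant ι : Set (EuclideanSpace ℝ ι)) x (S x))
    (hu₁ : ∀ x ∈ orthant ι, u ∘L S x = S x ∘L u)
    (hu₂ : ∀ x ∈ orthant ι, u ∘L adjoint (S x) = adjoint (S x) ∘L u) :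
    ∃ v : k →L[𝕜] k, u = v.compLpL 2 (volume.restrict (orthant ι : Set (EuclideanSpace ℝ ι))) := by
  have hχ : MemLp (expNegSum ι 𝕜) 2 (volume.restrict (orthant ι)) :=
    memLp_expNegSum two_ne_zero ENNReal.ofNat_ne_top
  obtain ⟨v, hv⟩ := IsShift.exists_apply_elementaryTensor_eq hS measurableSet_orthant
    volume_restrict_orthant_ne_zero hχ hu₂
  refine ⟨v, ext_on (dense_span_shift_elementaryTensor hS hχ) ?_⟩
  rintro _ ⟨x, hx, ξ, rfl⟩
  set χξ : OrthantL2 ι k := elementaryTensor (hχ.toLp _) ξ with hχξ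
  calc u (S x χξ) = S x (u χξ) := DFunLike.congr_fun (hu₁ x hx) χξ
    _ = S x (v.compLp χξ) := by rw [hχξ, hv, compLp_elementaryTensor]
    _ = v.compLp (S x χξ) := ((hS x hx).compLp_apply measurableSet_orthant v χξ).symm

end Commutant

/-- Any bounded operator on `L²(ℝ₊^d, k)` commuting with all shift isometries and their
adjoints is of the form `1 ⊗ v` for a bounded operator `v` on `k`: the commutant of the
von Neumann algebra generated by the shifts is `1 ⊗ B(k)`. -/
theorem shift_commutant {d : ℕ}
    {k : Type*} [NormedAddCommGroup k] [InnerProductSpace ℂ k] [CompleteSpace k]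
    [SecondCountableTopology k]
    (Q : Set (EuclideanSpace ℝ (Fin d)))
    (hQ : Q = {y : EuclideanSpace ℝ (Fin d) | ∀ i, 0 ≤ y i})
    (S : EuclideanSpace ℝ (Fin d) →
      (Lp k 2 (volume.restrict Q) →L[ℂ] Lp k 2 (volume.restrict Q)))
    (hS : ∀ x ∈ Q, ∀ f : Lp k 2 (volume.restrict Q),
      (S x f : EuclideanSpace ℝ (Fin d) → k) =ᵐ[volume.restrict Q]
        fun y => Set.indicator Q (⇑f) (y - x))
    (u : Lp k 2 (volume.restrict Q) →L[ℂ] Lp k 2 (volume.restrict Q))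
    (hu₁ : ∀ x ∈ Q, u ∘L S x = S x ∘L u)
    (hu₂ : ∀ x ∈ Q, u ∘L ContinuousLinearMap.adjoint (S x)
      = ContinuousLinearMap.adjoint (S x) ∘L u) :
    ∃ v : k →L[ℂ] k, ∀ f : Lp k 2 (volume.restrict Q),
      (u f : EuclideanSpace ℝ (Fin d) → k) =ᵐ[volume.restrict Q] fun y => v (f y) := by
  obtain rfl : Q = orthant (Fin d) := hQ
  obtain ⟨v, rfl⟩ := shift_commutant_general hS hu₁ hu₂
  exact ⟨v, v.coeFn_compLpL⟩
end
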